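/- arXiv:2101.07573 — 3 statements merged into one kernel-verified Lean document; each statement's English description precedes it below -/
import Mathlib

section
/- Let τ be a first-order language, T a τ-theory, and M a τ-structure. Then the following are equivalent: (1) M is a model of T_∀; (2) there exists a τ-structure N modeling T together with a τ-embedding of M into N. -/
open FirstOrder FirstOrder.Language

universe u v

namespace ModelCompanionship

variable {L : FirstOrder.Language.{u, v}}

/-- Iterated existential quantification over the last `k` bound variables. -/
def exsN {α : Type*} : ∀ {n k : ℕ}, L.BoundedFormula α (n + k) → L.BoundedFormula α n
  | _, 0, φ => φ
  | _, _ + 1, φ => exsN φ.ex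

/-- A sentence is universal (Π₁) if it is the universal closure of a
quantifier-free formula. -/
def IsUniversalSentence (φ : L.Sentence) : Prop :=
  ∃ (n : ℕ) (ψ : L.BoundedFormula Empty n), ψ.IsQF ∧ φ = ψ.alls

/-- A sentence is Π₂ if it is of the form `∀ x⃗ ∃ y⃗ φ` with `φ` quantifier-free. -/
def IsPi2Sentence (φ : L.Sentence) : Prop :=
  ∃ (m k : ℕ) (ψ : L.BoundedFormula Empty (m + k)), ψ.IsQF ∧ φ = (exsN ψ).alls

/-- A formula is existential if it is the existential closure of a
quantifier-free formula. -/
def IsExistentialFormula {α : Type*} (φ : L.Formula α) : Prop :=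
  ∃ (n : ℕ) (ψ : L.BoundedFormula α n), ψ.IsQF ∧ φ = ψ.exs

/-- A formula is universal if it is the universal closure of a
quantifier-free formula. -/
def IsUniversalFormula {α : Type*} (φ : L.Formula α) : Prop :=
  ∃ (n : ℕ) (ψ : L.BoundedFormula α n), ψ.IsQF ∧ φ = ψ.alls

/-- A bundled nonempty `L`-structure (with domain in universe `max u v`). -/
structure BStruc (L : FirstOrder.Language.{u, v}) where
  carrier : Type (max u v)
  [str : L.Structure carrier]
  [nonempty' : Nonempty carrier]

instance (N : BStruc L) : L.Structure N.carrier := N.str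

instance (N : BStruc L) : Nonempty N.carrier := N.nonempty'

/-- `φ` is a semantic consequence of `T`: it holds in every (nonempty) model of `T`. -/
def Consequence (T : L.Theory) (φ : L.Sentence) : Prop :=
  ∀ M : BStruc L, M.carrier ⊨ T → M.carrier ⊨ φ

/-- A formula with free variables is a semantic consequence of `T` if its universal
closure holds in every (nonempty) model of `T`. -/
def FormulaConsequence {α : Type*} (T : L.Theory) (φ : L.Formula α) : Prop :=
  ∀ M : BStruc L, M.carrier ⊨ T → ∀ v : α → M.carrier, φ.Realize v

/-- `T_∀`: the set of universal sentences which are consequences of `T`. -/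
def univConsequences (T : L.Theory) : L.Theory :=
  {φ | IsUniversalSentence φ ∧ Consequence T φ}

/-- A theory is complete if it is satisfiable and decides every sentence. -/
def IsCompleteTheory (T : L.Theory) : Prop :=
  T.IsSatisfiable ∧ ∀ φ : L.Sentence, Consequence T φ ∨ Consequence T φ.not

/-- A theory is Π₁-complete if it is satisfiable and decides every universal sentence. -/
def Pi1Complete (T : L.Theory) : Prop :=
  T.IsSatisfiable ∧ ∀ φ : L.Sentence, IsUniversalSentence φ →
    (Consequence T φ ∨ Consequence T φ.not)

/-- An embedding is Σ₁-elementary (`M ≺₁ N`) if it reflects existential formulas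
with parameters in the domain. -/
def Sigma1Elementary {M : Type*} {N : Type*} [L.Structure M] [L.Structure N]
    (j : M ↪[L] N) : Prop :=
  ∀ (n : ℕ) (φ : L.Formula (Fin n)), IsExistentialFormula φ →
    ∀ a : Fin n → M, φ.Realize (fun i => j (a i)) → φ.Realize a

/-- An embedding is elementary if it preserves and reflects all first-order formulas. -/
def ElementaryEmb {M : Type*} {N : Type*} [L.Structure M] [L.Structure N]
    (j : M ↪[L] N) : Prop :=
  ∀ (n : ℕ) (φ : L.Formula (Fin n)) (a : Fin n → M),
    φ.Realize (fun i => j (a i)) ↔ φ.Realize a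

/-- `M` is `T`-existentially closed: it embeds into a model of `T` and every
embedding of `M` into a model of `T` is Σ₁-elementary. -/
def IsEC (T : L.Theory) (M : Type*) [L.Structure M] : Prop :=
  (∃ N : BStruc L, N.carrier ⊨ T ∧ Nonempty (M ↪[L] N.carrier)) ∧
  ∀ N : BStruc L, N.carrier ⊨ T → ∀ j : M ↪[L] N.carrier, Sigma1Elementary j

/-- A theory is model complete if every embedding between its models is elementary. -/
def ModelComplete (T : L.Theory) : Prop :=
  ∀ M N : BStruc L, M.carrier ⊨ T → N.carrier ⊨ T →
    ∀ j : M.carrier ↪[L] N.carrier, ElementaryEmb j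

/-- `Tstar` is the model companion of `T`. -/
def IsModelCompanion (T Tstar : L.Theory) : Prop :=
  (∀ M : BStruc L, M.carrier ⊨ T →
    ∃ N : BStruc L, N.carrier ⊨ Tstar ∧ Nonempty (M.carrier ↪[L] N.carrier)) ∧
  (∀ M : BStruc L, M.carrier ⊨ Tstar →
    ∃ N : BStruc L, N.carrier ⊨ T ∧ Nonempty (M.carrier ↪[L] N.carrier)) ∧
  ModelComplete Tstar

/-!
Universal sentences pass down along embeddings, which gives one direction. Conversely, let
`M ⊨ T_∀`. The universal closure of a quantifier-free formula that holds throughout the models of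
`T` lies in `T_∀`, so such a formula holds throughout `M`; hence the negation of a conjunction of
finitely many quantifier-free facts about elements of `M` is never such a formula, and each finite
part of the quantifier-free diagram of `M` is realized in a model of `T`. By compactness the whole
diagram is realized in one model of `T`, and the realizing assignment is an embedding.
-/

universe w

variable {T : L.Theory} {M : Type*} [L.Structure M]

-- `Consequence` speaks of models in one universe; `⊨ᵇ` passes to models in every universe.
theorem consequence_iff_models {φ : L.Sentence} : Consequence T φ ↔ T ⊨ᵇ φ := by
  rw [Theory.models_sentence_iff]
  exact ⟨fun h N => h ⟨N⟩ N.is_model, fun h N hN => h ⟨N.carrier⟩⟩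

theorem isUniversal_alls {α : Type*} : ∀ {n : ℕ} {ψ : L.BoundedFormula α n},
    ψ.IsUniversal → BoundedFormula.IsUniversal ψ.alls
  | 0, _, hψ => hψ
  | _ + 1, ψ, hψ => isUniversal_alls (ψ := ψ.all) hψ.all

instance univConsequences_isUniversal : (univConsequences T).IsUniversal where
  isUniversal_of_mem := by
    rintro _ ⟨⟨n, ψ, hψ, rfl⟩, -⟩
    exact isUniversal_alls hψ.isUniversal

theorem models_univConsequences_of_models [Nonempty M] [M ⊨ T] : M ⊨ univConsequences T :=
  Theory.model_iff _ |>.2 fun _ hφ => (consequence_iff_models.1 hφ.2).realize_sentence M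

section QuantifierFree

variable {α β : Type*} {n : ℕ}

theorem isQF_restrictFreeVar [DecidableEq α] {ψ : L.BoundedFormula α n} (hψ : ψ.IsQF)
    (f : ψ.freeVarFinset → β) : (ψ.restrictFreeVar f).IsQF := by
  induction hψ with
  | falsum => exact .falsum
  | of_isAtomic hatomic =>
    cases hatomic with
    | equal => exact (BoundedFormula.IsAtomic.equal _ _).isQF
    | rel => exact (BoundedFormula.IsAtomic.rel _ _).isQF
  | imp _ _ ih₁ ih₂ => exact (ih₁ _).imp (ih₂ _)

theorem isQF_iInf [Finite β] {f : β → L.BoundedFormula α n} (hf : ∀ b, (f b).IsQF) :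
    (BoundedFormula.iInf f).IsQF := by
  rw [BoundedFormula.iInf, List.foldr_map]
  exact List.foldrRecOn _ _ .top fun _ hψ b _ => (hf b).inf hψ

theorem isUniversalSentence_iAlls [Finite β] {ψ : L.Formula (Empty ⊕ β)}
    (hψ : BoundedFormula.IsQF ψ) : IsUniversalSentence (ψ.iAlls β) :=
  ⟨_, _, hψ.relabel _, rfl⟩

end QuantifierFree

section AllClosure

variable {α : Type*} [DecidableEq α] {ψ : L.Formula α}

/-- The universal closure of a formula, quantifying over exactly the variables that occur free in
it; the universal counterpart of `FirstOrder.Language.Formula.exClosure`. -/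
noncomputable def allClosure (ψ : L.Formula α) : L.Sentence :=
  Formula.iAlls ψ.freeVarFinset (ψ.restrictFreeVar Sum.inr)

theorem isUniversalSentence_allClosure (hψ : BoundedFormula.IsQF ψ) :
    IsUniversalSentence (allClosure ψ) :=
  isUniversalSentence_iAlls (isQF_restrictFreeVar hψ _)

theorem realize_of_models_allClosure (h : M ⊨ allClosure ψ) (v : α → M) : ψ.Realize v :=
  (BoundedFormula.realize_restrictFreeVar (f := Sum.inr) v fun _ => rfl).1
    (Formula.realize_iAlls.1 h fun a => v a)

theorem models_allClosure [Nonempty M] (h : ∀ v : α → M, ψ.Realize v) : M ⊨ allClosure ψ :=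
  Formula.realize_iAlls.2 fun x =>
    (BoundedFormula.realize_restrictFreeVar (f := Sum.inr)
      (Function.extend Subtype.val x fun _ => Classical.arbitrary M)
      fun a => (Subtype.val_injective.extend_apply x _ a).symm).2 (h _)

end AllClosure

theorem realize_of_isQF_of_models [M ⊨ univConsequences T] {α : Type w}
    {ψ : L.Formula α} (hψ : BoundedFormula.IsQF ψ) (hT : T ⊨ᵇ ψ) (v : α → M) : ψ.Realize v := by
  classical
  have hmem : allClosure ψ ∈ univConsequences T :=
    ⟨isUniversalSentence_allClosure hψ,
      fun N _ => models_allClosure fun _ => hT.realize_formula N.carrier⟩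
  exact realize_of_models_allClosure (Theory.realize_sentence_of_mem _ hmem) v

section Compactness

variable {α : Type w} {S : Set (L.Formula α)}

theorem isSatisfiable_onTheory_union_equivSentence (N : Type*) [L.Structure N] [Nonempty N]
    [N ⊨ T] {v : α → N} (hv : ∀ ψ ∈ S, ψ.Realize v) :
    ((L.lhomWithConstants α).onTheory T ∪ Formula.equivSentence '' S).IsSatisfiable := by
  let : (constantsOn α).Structure N := constantsOn.structure v
  have hT : N ⊨ (L.lhomWithConstants α).onTheory T := (LHom.onTheory_model _ _).2 inferInstance
  have hS : N ⊨ (Formula.equivSentence '' S : L[[α]].Theory) :=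
    Theory.model_iff _ |>.2 <| Set.forall_mem_image.2 fun ψ hψ =>
      (Formula.realize_equivSentence _ _).2 (hv ψ hψ)
  have : N ⊨ (L.lhomWithConstants α).onTheory T ∪ Formula.equivSentence '' S := hT.union hS
  exact Theory.Model.isSatisfiable N

theorem exists_realize_of_isSatisfiable_onTheory_union
    (h : ((L.lhomWithConstants α).onTheory T ∪ Formula.equivSentence '' S).IsSatisfiable) :
    ∃ (N : T.ModelType.{u, v, max u v w}) (v : α → N), ∀ ψ ∈ S, ψ.Realize v := by
  obtain ⟨N⟩ := h
  let : L.Structure N := (L.lhomWithConstants α).reduct N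
  have hT : N ⊨ T :=
    (LHom.onTheory_model (L.lhomWithConstants α) T).1 (N.is_model.mono Set.subset_union_left)
  refine ⟨.of T N, fun a => (L.con a : N), fun ψ hψ => ?_⟩
  exact (Formula.realize_equivSentence N ψ).1
    (N.is_model.realize_of_mem _ (.inr (Set.mem_image_of_mem _ hψ)))

theorem exists_realize_of_forall_finset
    (h : ∀ s : Finset (L.Formula α), ↑s ⊆ S →
      ∃ (N : T.ModelType.{u, v, max u v w}) (v : α → N), ∀ ψ ∈ s, ψ.Realize v) :
    ∃ (N : T.ModelType.{u, v, max u v w}) (v : α → N), ∀ ψ ∈ S, ψ.Realize v := by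
  classical
  refine exists_realize_of_isSatisfiable_onTheory_union
    (Theory.isSatisfiable_iff_isFinitelySatisfiable.2 fun T₀ hT₀ => ?_)
  let s : Finset (L.Formula α) :=
    {ψ ∈ T₀.preimage Formula.equivSentence Formula.equivSentence.injective.injOn | ψ ∈ S}
  obtain ⟨N, v, hv⟩ := h s fun ψ hψ => (Finset.mem_filter.1 hψ).2
  refine (isSatisfiable_onTheory_union_equivSentence (T := T) (S := s) N hv).mono fun σ hσ => ?_
  refine (hT₀ hσ).imp_right ?_
  rintro ⟨ψ, hψ, rfl⟩
  exact Set.mem_image_of_mem _ (Finset.mem_filter.2 ⟨Finset.mem_preimage.2 hσ, hψ⟩)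

end Compactness

section Diagram

/-- The quantifier-free diagram of `M`. Elements of `M` serve as free variables naming themselves,
instead of as constants of an expanded language. -/
def qfDiagram (L : FirstOrder.Language.{u, v}) (M : Type*) [L.Structure M] : Set (L.Formula M) :=
  {ψ | BoundedFormula.IsQF ψ ∧ ψ.Realize id}

theorem exists_model_realize_finset_qfDiagram {M : Type w} [L.Structure M]
    [M ⊨ univConsequences T] {s : Finset (L.Formula M)} (hs : ↑s ⊆ qfDiagram L M) :
    ∃ (N : T.ModelType.{u, v, max u v w}) (v : M → N), ∀ ψ ∈ s, ψ.Realize v := by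
  let conj : L.Formula M := Formula.iInf fun ψ : s => ψ.1
  have hconj : BoundedFormula.IsQF conj := isQF_iInf fun ψ => (hs ψ.2).1
  have conj_id : conj.Realize id := Formula.realize_iInf.2 fun ψ => (hs ψ.2).2
  by_contra! hN
  have hT : T ⊨ᵇ conj.not := Theory.models_formula_iff.2 fun N v hv =>
    have ⟨ψ, hψ, hψv⟩ := hN N v
    hψv (Formula.realize_iInf.1 hv ⟨ψ, hψ⟩)
  exact realize_of_isQF_of_models hconj.not hT id conj_id

variable {N : Type*} [L.Structure N] {j : M → N}

theorem realize_iff_of_realize_qfDiagram (hj : ∀ ψ ∈ qfDiagram L M, ψ.Realize j)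
    {ψ : L.Formula M} (hψ : BoundedFormula.IsQF ψ) : ψ.Realize j ↔ ψ.Realize id := by
  refine ⟨fun hψj => ?_, fun hψid => hj ψ ⟨hψ, hψid⟩⟩
  by_contra hψid
  exact hj ψ.not ⟨hψ.not, hψid⟩ hψj

/-- The embedding whose underlying map preserves and reflects atomic formulas. -/
def embeddingOfRealizeAtomic (j : M → N)
    (hj : ∀ ψ : L.Formula M, BoundedFormula.IsAtomic ψ → (ψ.Realize j ↔ ψ.Realize id)) :
    M ↪[L] N where
  toFun := j
  inj' a b hab := by
    simpa [hab] using hj ((Term.var a).equal (Term.var b)) (.equal _ _)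
  map_fun' f x := by
    simpa [Function.comp_def] using
      hj ((Term.var (Structure.funMap f x)).equal (Term.func f fun i => Term.var (x i)))
        (.equal _ _)
  map_rel' r x := by
    simpa [Function.comp_def] using hj (r.formula fun i => Term.var (x i)) (.rel _ _)

end Diagram

theorem exists_embedding_of_models_univConsequences (T : L.Theory) (M : Type w) [L.Structure M]
    [M ⊨ univConsequences T] : ∃ N : T.ModelType.{u, v, max u v w}, Nonempty (M ↪[L] N) := by
  obtain ⟨N, j, hj⟩ :=
    exists_realize_of_forall_finset fun _ => exists_model_realize_finset_qfDiagram (T := T) (M := M)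
  exact ⟨N, ⟨embeddingOfRealizeAtomic j fun ψ hψ => realize_iff_of_realize_qfDiagram hj hψ.isQF⟩⟩

theorem models_univConsequences_iff_embeds_into_model_general (T : L.Theory)
    (M : Type w) [L.Structure M] :
    M ⊨ univConsequences T ↔ ∃ N : T.ModelType.{u, v, max u v w}, Nonempty (M ↪[L] N) := by
  refine ⟨fun _ => exists_embedding_of_models_univConsequences T M, ?_⟩
  rintro ⟨N, ⟨j⟩⟩
  have : N ⊨ univConsequences T := models_univConsequences_of_models
  exact Theory.IsUniversal.models_of_embedding j

/-- A structure models `T_∀` iff it embeds into a model of `T`. -/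
theorem models_univConsequences_iff_embeds_into_model (T : L.Theory)
    (M : Type (max u v)) [L.Structure M] [Nonempty M] :
    M ⊨ univConsequences T ↔
      ∃ N : BStruc L, N.carrier ⊨ T ∧ Nonempty (M ↪[L] N.carrier) := by
  rw [models_univConsequences_iff_embeds_into_model_general]
  exact ⟨fun ⟨N, hj⟩ => ⟨⟨N⟩, N.is_model, hj⟩, fun ⟨N, _, hj⟩ => ⟨.of T N.carrier, hj⟩⟩

end ModelCompanionship
end

section
/- Let τ be a first-order language, T a τ-theory, and M a T-existentially closed τ-structure. If N is a τ-structure which is a substructure of M with N ≺₁ M, then N is also T-existentially closed. -/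
open FirstOrder FirstOrder.Language

universe u v

namespace ModelCompanionship

variable {L : FirstOrder.Language.{u, v}}

/-!
Let `i : N → M` be Σ₁-elementary. Any finite part of the quantifier-free diagram of `M` can be
realized in `N` by a map `v : M → N` that sends `i x` back to `x`, so some ultrafilter `U` on
`M → N` contains, for each such condition, the set of maps meeting it. Given an embedding
`j : N → P`, the map `m ↦ [v ↦ j (v m)]` embeds `M` into the ultrapower of `P` along `U`, and it
agrees with the diagonal embedding of `P` over `N`. By Łoś's theorem the ultrapower is a model of
`T` whenever `P` is. An existential formula over `N` that holds in `P` therefore passes up to the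
ultrapower, down to `M` because `M` is existentially closed, and down to `N` along `i`.
-/

section Formulas

variable {α β : Type*}

lemma isQF_restrictFreeVar_s5 [DecidableEq α] {n : ℕ} {φ : L.BoundedFormula α n} (hφ : φ.IsQF)
    (f : φ.freeVarFinset → β) : (φ.restrictFreeVar f).IsQF := by
  induction hφ with
  | falsum => exact .falsum
  | of_isAtomic hatomic =>
    cases hatomic with
    | equal => exact (BoundedFormula.IsAtomic.equal _ _).isQF
    | rel => exact (BoundedFormula.IsAtomic.rel _ _).isQF
  | imp _ _ ih₁ ih₂ => exact (ih₁ _).imp (ih₂ _)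

lemma isExistentialFormula_iExs [Finite β] {θ : L.Formula (α ⊕ β)} (hθ : θ.IsQF) :
    IsExistentialFormula (θ.iExs β) :=
  ⟨_, _, hθ.relabel _, rfl⟩

lemma realize_comp_embedding_iff {M N : Type*} [L.Structure M] [L.Structure N]
    {θ : L.Formula α} (hθ : θ.IsQF) (j : N ↪[L] M) (v : α → N) :
    θ.Realize (j ∘ v) ↔ θ.Realize v := by
  rw [Formula.Realize, Formula.Realize, ← hθ.realize_embedding j, Subsingleton.elim (j ∘ default)]

end Formulas

/-- The embedding given by a map that preserves the quantifier-free diagram of its domain, an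
element `m : M` serving as the variable that names it. -/
def embeddingOfRealizeQF {M Q : Type*} [L.Structure M] [L.Structure Q] (f : M → Q)
    (hf : ∀ θ : L.Formula M, θ.IsQF → θ.Realize id → θ.Realize f) : M ↪[L] Q where
  toFun := f
  inj' x y hxy := by
    by_contra hne
    have hnot := hf ((Term.var x).equal (Term.var y)).not
      (BoundedFormula.IsAtomic.equal _ _).isQF.not (by simpa [Formula.realize_not] using hne)
    simp [Formula.realize_not, hxy] at hnot
  map_fun' F xs := by
    have heq := hf ((Term.func F fun p ↦ Term.var (xs p)).equal (Term.var (Structure.funMap F xs)))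
      (BoundedFormula.IsAtomic.equal _ _).isQF (by simp)
    simpa [Function.comp_def] using heq.symm
  map_rel' R xs := by
    have hrel := hf (R.formula fun p ↦ Term.var (xs p)) (BoundedFormula.IsAtomic.rel _ _).isQF
    have hnot := hf (R.formula fun p ↦ Term.var (xs p)).not
      (BoundedFormula.IsAtomic.rel _ _).isQF.not
    simp only [Formula.realize_not, Formula.realize_rel, Term.realize_var, id_eq] at hrel hnot
    exact ⟨not_imp_not.mp hnot, hrel⟩

/-- The elementary embedding of a structure into its ultrapower along `U`, sending an element to
the class of the constant function. -/
def ultrapowerDiagonal (L : FirstOrder.Language.{u, v}) {I : Type*} (U : Ultrafilter I)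
    (P : Type*) [L.Structure P] [Nonempty P] :
    P ↪ₑ[L] (U : Filter I).Product fun _ ↦ P where
  toFun x := ((fun _ ↦ x : I → P) : (U : Filter I).Product fun _ ↦ P)
  map_formula' _ φ x :=
    (Ultraproduct.realize_formula_cast φ fun k _ ↦ x k).trans Filter.eventually_const

namespace Sigma1Elementary

variable {M N : Type*} [L.Structure M] [L.Structure N] {i : N ↪[L] M}

lemma realize_of_realize_comp {α : Type*} (hi : Sigma1Elementary i) {φ : L.Formula α}
    (hφ : IsExistentialFormula φ) {a : α → N} (h : φ.Realize (i ∘ a)) : φ.Realize a := by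
  classical
  obtain ⟨n, ψ, hψ, rfl⟩ := hφ
  let e := ψ.freeVarFinset.equivFin
  let a' : Fin ψ.freeVarFinset.card → N := fun p ↦ a (e.symm p)
  rw [BoundedFormula.realize_exs] at h ⊢
  obtain ⟨xs, hxs⟩ := h
  have hM : (ψ.restrictFreeVar e).exs.Realize (i ∘ a') :=
    BoundedFormula.realize_exs.mpr
      ⟨xs, (BoundedFormula.realize_restrictFreeVar (i ∘ a) (by simp [a'])).mpr hxs⟩
  have hN : (ψ.restrictFreeVar e).exs.Realize a' :=
    hi _ _ ⟨n, _, isQF_restrictFreeVar_s5 hψ e, rfl⟩ a' hM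
  obtain ⟨ys, hys⟩ := BoundedFormula.realize_exs.mp hN
  exact ⟨ys, (BoundedFormula.realize_restrictFreeVar a (by simp [a'])).mp hys⟩

-- The free variables of `θ` in the range of `i` become parameters, the others are quantified.
lemma exists_leftInverse_realize [Nonempty N] (hi : Sigma1Elementary i) {θ : L.Formula M}
    (hθ : θ.IsQF) (h : θ.Realize id) : ∃ v : M → N, Function.LeftInverse v i ∧ θ.Realize v := by
  classical
  let S := θ.freeVarFinset
  let g : S → N ⊕ S := fun m ↦ if hm : ∃ x, i x = m then .inl hm.choose else .inr m
  let θ' : L.Formula (N ⊕ S) := θ.restrictFreeVar g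
  have hM : (θ'.iExs S).Realize (i ∘ id) := by
    refine Formula.realize_iExs.mpr
      ⟨(↑), (BoundedFormula.realize_restrictFreeVar id fun m ↦ ?_).mpr h⟩
    by_cases hm : ∃ x, i x = m
    · simpa [g, hm] using hm.choose_spec
    · simp [g, hm]
  have hN : (θ'.iExs S).Realize id :=
    hi.realize_of_realize_comp (isExistentialFormula_iExs (isQF_restrictFreeVar_s5 hθ g)) hM
  obtain ⟨b, hb⟩ := Formula.realize_iExs.mp hN
  let v : M → N := Function.extend i id (Function.extend (↑) b fun _ ↦ Classical.arbitrary N)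
  have hv : Function.LeftInverse v i := i.injective.extend_apply id _
  refine ⟨v, hv, (BoundedFormula.realize_restrictFreeVar v fun m ↦ ?_).mp hb⟩
  by_cases hm : ∃ x, i x = m
  · have hvm : v m = hm.choose := by rw [← hv hm.choose, hm.choose_spec]
    simp [g, hm, hvm]
  · simp [g, hm, v]

lemma exists_ultrafilter_eventually_realize [Nonempty N] (hi : Sigma1Elementary i) :
    ∃ U : Ultrafilter (M → N), (∀ᶠ v in U, Function.LeftInverse v i) ∧
      ∀ θ : L.Formula M, θ.IsQF → θ.Realize id → ∀ᶠ v : M → N in U, θ.Realize v := by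
  let Diagram := {θ : L.Formula M // θ.IsQF ∧ θ.Realize id}
  let retractions : Diagram → Set (M → N) := fun θ ↦ {v | Function.LeftInverse v i ∧ θ.1.Realize v}
  let top : Diagram := ⟨⊤, .top, Formula.realize_top.mpr trivial⟩
  have : Nonempty Diagram := ⟨top⟩
  have hdirected : Directed (· ≥ ·) fun θ ↦ Filter.principal (retractions θ) := fun θ η ↦
    ⟨⟨θ.1 ⊓ η.1, θ.2.1.inf η.2.1, Formula.realize_inf.mpr ⟨θ.2.2, η.2.2⟩⟩,
      Filter.principal_mono.mpr fun _ hv ↦ ⟨hv.1, (Formula.realize_inf.mp hv.2).1⟩,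
      Filter.principal_mono.mpr fun _ hv ↦ ⟨hv.1, (Formula.realize_inf.mp hv.2).2⟩⟩
  have : (⨅ θ, Filter.principal (retractions θ)).NeBot :=
    Filter.iInf_neBot_of_directed' hdirected fun θ ↦
      Filter.principal_neBot_iff.mpr (hi.exists_leftInverse_realize θ.2.1 θ.2.2)
  let U := Ultrafilter.of (⨅ θ, Filter.principal (retractions θ))
  have hU (θ : Diagram) : ∀ᶠ v in U, v ∈ retractions θ :=
    Filter.le_principal_iff.mp ((Ultrafilter.of_le _).trans (iInf_le _ θ))
  exact ⟨U, (hU top).mono fun _ hv ↦ hv.1,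
    fun θ hθ hid ↦ (hU ⟨θ, hθ, hid⟩).mono fun _ hv ↦ hv.2⟩

end Sigma1Elementary

universe w₁ w₂ w₃

theorem Sigma1Elementary.exists_amalgamation {M : Type w₁} {N : Type w₂} {P : Type w₃}
    [L.Structure M] [L.Structure N] [L.Structure P] [Nonempty N] {i : N ↪[L] M}
    (hi : Sigma1Elementary i) (j : N ↪[L] P) :
    ∃ (Q : Type (max w₁ w₂ w₃)) (_ : L.Structure Q) (d : P ↪ₑ[L] Q) (k : M ↪[L] Q),
      ∀ x, k (i x) = d (j x) := by
  have : Nonempty P := .map j inferInstance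
  obtain ⟨U, hretract, hdiagram⟩ := hi.exists_ultrafilter_eventually_realize
  let f : M → (U : Filter (M → N)).Product fun _ ↦ P := fun m ↦
    ((fun v ↦ j (v m) : (M → N) → P) : (U : Filter (M → N)).Product fun _ ↦ P)
  have hf (θ : L.Formula M) (hθ : θ.IsQF) (hid : θ.Realize id) : θ.Realize f :=
    (Ultraproduct.realize_formula_cast θ fun m v ↦ j (v m)).mpr <|
      (hdiagram θ hθ hid).mono fun v hv ↦ (realize_comp_embedding_iff hθ j v).mpr hv
  exact ⟨_, inferInstance, ultrapowerDiagonal L U P, embeddingOfRealizeQF f hf,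
    fun x ↦ Quotient.sound (hretract.mono fun v hv ↦ congrArg j (hv x))⟩

/-- A Σ₁-elementary substructure of a `T`-existentially closed structure is
`T`-existentially closed. -/
theorem isEC_of_sigma1Elementary_into_isEC (T : L.Theory)
    (M N : Type (max u v)) [L.Structure M] [L.Structure N] [Nonempty M] [Nonempty N]
    (hM : IsEC T M) (i : N ↪[L] M) (hi : Sigma1Elementary i) :
    IsEC T N := by
  obtain ⟨⟨P₀, hP₀, ⟨j₀⟩⟩, hM_reflects⟩ := hM
  refine ⟨⟨P₀, hP₀, ⟨j₀.comp i⟩⟩, fun P hP j n φ hφ a hφP ↦ ?_⟩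
  obtain ⟨Q, _, d, k, hk⟩ := hi.exists_amalgamation j
  have : Nonempty Q := .map d inferInstance
  have hQ : Q ⊨ T := (d.theory_model_iff T).mp hP
  have hφQ : φ.Realize fun p ↦ k (i (a p)) := by
    simp only [hk]
    exact (d.map_formula φ _).mpr hφP
  have hφM : φ.Realize fun p ↦ i (a p) := hM_reflects ⟨Q⟩ hQ k n φ hφ _ hφQ
  exact hi n φ hφ a hφM

end ModelCompanionship
end

section
/- (Robinson's test) Let τ be a first-order language and T a τ-theory. The following are equivalent: (a) T is model complete, i.e. whenever M and N are models of T with M a substructure of N, then M is an elementary substructure of N; (b) every model of T is T-existentially closed; (c) every existential τ-formula φ(x⃗) is T-equivalent to a universal τ-formula ψ(x⃗) in the same free variables (T ⊨ ∀x⃗ (φ(x⃗) ↔ ψ(x⃗))); (d) every τ-formula φ(x⃗) is T-equivalent to a universal τ-formula ψ(x⃗) in the same free variables. -/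
open FirstOrder FirstOrder.Language

universe u v

namespace ModelCompanionship

variable {L : FirstOrder.Language.{u, v}}

/-!
If every formula is universal modulo `T`, then embeddings between models of `T` reflect every
formula and its negation, hence are elementary. Conversely, if every model of `T` is `T`-ec, then
existential formulas are reflected by embeddings between models of `T`, so they are universal modulo
`T` by the Łoś–Tarski theorem: a model of all universal consequences of `φ` embeds into a model of
`φ`, by compactness applied to its diagram. Finally, since the negation of a universal formula is
existential, once existential formulas are universal modulo `T` the formulas universal modulo `T`
are closed under negation and universal quantification, so they include all prenex formulas.
-/

section QuantifierComplexity

variable {α β : Type*} {n : ℕ}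

theorem isQF_toFormula {φ : L.BoundedFormula α n} (hφ : φ.IsQF) :
    BoundedFormula.IsQF φ.toFormula := by
  induction hφ with
  | falsum => exact .falsum
  | of_isAtomic hφ =>
    cases hφ with
    | equal => exact (BoundedFormula.IsAtomic.equal _ _).isQF
    | rel => exact (BoundedFormula.IsAtomic.rel _ _).isQF
  | imp _ _ ih₁ ih₂ => exact ih₁.imp ih₂

theorem isUniversal_relabel {m : ℕ} {φ : L.BoundedFormula α m} (hφ : φ.IsUniversal)
    (g : α → β ⊕ Fin n) : (φ.relabel g).IsUniversal := by
  induction hφ with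
  | of_isQF hφ => exact (hφ.relabel g).isUniversal
  | all _ ih => simpa only [BoundedFormula.relabel_all] using ih.all

theorem isExistential_relabel {m : ℕ} {φ : L.BoundedFormula α m} (hφ : φ.IsExistential)
    (g : α → β ⊕ Fin n) : (φ.relabel g).IsExistential := by
  induction hφ with
  | of_isQF hφ => exact (hφ.relabel g).isExistential
  | ex _ ih => simpa only [BoundedFormula.relabel_ex] using ih.ex

theorem isUniversal_alls_s12 {φ : L.BoundedFormula α n} (hφ : φ.IsUniversal) :
    φ.alls.IsUniversal := by
  induction n with
  | zero => exact hφ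
  | succ n ih => exact ih hφ.all

theorem isUniversalFormula_alls {φ : L.BoundedFormula α n} (hφ : φ.IsUniversal) :
    IsUniversalFormula φ.alls := by
  induction hφ with
  | of_isQF hφ => exact ⟨_, _, hφ, rfl⟩
  | all _ ih => exact ih

theorem isUniversalFormula_iff_isUniversal {φ : L.Formula α} :
    IsUniversalFormula φ ↔ φ.IsUniversal :=
  ⟨fun ⟨_, _, hψ, h⟩ => h ▸ isUniversal_alls_s12 hψ.isUniversal, isUniversalFormula_alls⟩

theorem isExistentialFormula_exs {φ : L.BoundedFormula α n} (hφ : φ.IsExistential) :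
    IsExistentialFormula φ.exs := by
  induction hφ with
  | of_isQF hφ => exact ⟨_, _, hφ, rfl⟩
  | ex _ ih => exact ih

theorem isUniversal_iAlls [Finite β] {φ : L.Formula (α ⊕ β)} (hφ : φ.IsUniversal) :
    (φ.iAlls β).IsUniversal :=
  isUniversal_alls_s12 (isUniversal_relabel hφ _)

theorem exists_isExistential_iff_not (T : L.Theory) {φ : L.BoundedFormula α n}
    (hφ : φ.IsUniversal) : ∃ ψ : L.BoundedFormula α n, ψ.IsExistential ∧ (φ.not ⇔[T] ψ) := by
  induction hφ with
  | of_isQF hφ => exact ⟨_, hφ.not.isExistential, .refl _⟩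
  | @all n φ _ ih =>
    obtain ⟨ψ, hψ, hφψ⟩ := ih
    have all_not_iff : φ.all.not ⇔[T] φ.not.ex := fun M v xs => by
      simp only [BoundedFormula.realize_iff, BoundedFormula.realize_not,
        BoundedFormula.realize_all, BoundedFormula.realize_ex, not_forall]
    exact ⟨ψ.ex, hψ.ex, all_not_iff.trans hφψ.ex⟩

theorem realize_congr_of_eqOn_freeVarFinset [DecidableEq α] {M : Type*} [L.Structure M]
    {φ : L.Formula α} {v w : α → M} (h : ∀ x ∈ φ.freeVarFinset, v x = w x) :
    φ.Realize v ↔ φ.Realize w :=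
  (BoundedFormula.realize_restrictFreeVar (f := id) (v := fun x => v x) v fun _ => rfl).symm.trans
    (BoundedFormula.realize_restrictFreeVar w fun x => h x x.2)

open Classical in
/-- Universal quantification over all the variables in `β`, possibly infinitely many. Only finitely
many of them occur in `φ`; the others are all renamed to the single variable `none`. -/
noncomputable def forallRight (φ : L.Formula (α ⊕ β)) : L.Formula α :=
  (φ.relabel (Sum.map id fun y => if hy : y ∈ φ.freeVarFinset.toRight then some ⟨y, hy⟩ else none)
    : L.Formula (α ⊕ Option φ.freeVarFinset.toRight)).iAlls _

theorem isUniversal_forallRight {φ : L.Formula (α ⊕ β)} (hφ : φ.IsUniversal) :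
    (forallRight φ).IsUniversal :=
  isUniversal_iAlls (isUniversal_relabel hφ _)

theorem realize_forallRight {M : Type*} [L.Structure M] [Nonempty M] {φ : L.Formula (α ⊕ β)}
    {v : α → M} : (forallRight φ).Realize v ↔ ∀ w : β → M, φ.Realize (Sum.elim v w) := by
  classical
  simp only [forallRight, Formula.realize_iAlls, Formula.realize_relabel, Sum.elim_comp_map,
    Function.comp_id]
  refine ⟨fun h w => ?_, fun h w => h _⟩
  refine (realize_congr_of_eqOn_freeVarFinset ?_).1
    (h (Option.elim · (Classical.arbitrary M) fun y => w y))
  rintro (x | y) hxy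
  · rfl
  · simp [hxy]

end QuantifierComplexity

section IsUniversalMod

variable {α β : Type*} {n : ℕ} {T : L.Theory}

/-- `φ` is universal modulo `T`: it is `T`-equivalent to a universal formula in the same free
variables. Stated for bounded formulas, and with Mathlib's inductive notion of universality, so that
it is visibly stable under universal quantification. -/
def IsUniversalMod (T : L.Theory) (φ : L.BoundedFormula α n) : Prop :=
  ∃ ψ : L.BoundedFormula α n, ψ.IsUniversal ∧ (φ ⇔[T] ψ)

theorem formulaConsequence_iff_models {α : Type} {φ : L.Formula α} :
    FormulaConsequence T φ ↔ T ⊨ᵇ φ :=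
  ⟨fun h => Theory.models_formula_iff.2 fun M => h ⟨M⟩ M.is_model,
    fun h M _ _ => h.realize_formula M.carrier⟩

theorem isUniversalMod_iff_exists_isUniversalFormula {α : Type} {φ : L.Formula α} :
    IsUniversalMod T φ ↔
      ∃ ψ : L.Formula α, IsUniversalFormula ψ ∧ FormulaConsequence T (φ.iff ψ) := by
  simp only [isUniversalFormula_iff_isUniversal, formulaConsequence_iff_models]
  rfl

namespace IsUniversalMod

theorem of_isUniversal {φ : L.BoundedFormula α n} (hφ : φ.IsUniversal) : IsUniversalMod T φ :=
  ⟨φ, hφ, .refl φ⟩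

theorem congr {φ ψ : L.BoundedFormula α n} (h : φ ⇔[T] ψ) (hψ : IsUniversalMod T ψ) :
    IsUniversalMod T φ :=
  let ⟨χ, hχ, hψχ⟩ := hψ
  ⟨χ, hχ, h.trans hψχ⟩

theorem all {φ : L.BoundedFormula α (n + 1)} (hφ : IsUniversalMod T φ) :
    IsUniversalMod T φ.all :=
  let ⟨ψ, hψ, hφψ⟩ := hφ
  ⟨ψ.all, hψ.all, hφψ.all⟩

theorem relabel {m : ℕ} {φ : L.BoundedFormula α m} (hφ : IsUniversalMod T φ)
    (g : α → β ⊕ Fin n) : IsUniversalMod T (φ.relabel g) := by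
  obtain ⟨ψ, hψ, hφψ⟩ := hφ
  refine ⟨ψ.relabel g, isUniversal_relabel hψ g, fun M v xs => ?_⟩
  simp only [BoundedFormula.realize_iff, BoundedFormula.realize_relabel, hφψ.realize_bd_iff]

theorem of_toFormula {φ : L.BoundedFormula α n} (hφ : IsUniversalMod T φ.toFormula) :
    IsUniversalMod T φ := by
  refine congr (fun M v xs => ?_) (hφ.relabel (id : α ⊕ Fin n → α ⊕ Fin n))
  rw [BoundedFormula.realize_iff, BoundedFormula.realize_relabel]
  exact (BoundedFormula.realize_toFormula φ (Sum.elim v xs)).symm.trans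
    (iff_of_eq (congrArg (BoundedFormula.Realize φ.toFormula _) (Subsingleton.elim _ _)))

theorem inf {φ ψ : L.Formula α} (hφ : IsUniversalMod T φ) (hψ : IsUniversalMod T ψ) :
    IsUniversalMod T (φ ⊓ ψ) := by
  obtain ⟨φ', hφ', hφφ'⟩ := hφ
  obtain ⟨ψ', hψ', hψψ'⟩ := hψ
  obtain ⟨k, θ, hθ, rfl⟩ := isUniversalFormula_iff_isUniversal.2 hφ'
  obtain ⟨m, χ, hχ, rfl⟩ := isUniversalFormula_iff_isUniversal.2 hψ'
  let ρ : L.Formula (α ⊕ (Fin k ⊕ Fin m)) :=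
    θ.toFormula.relabel (Sum.map id Sum.inl) ⊓ χ.toFormula.relabel (Sum.map id Sum.inr)
  have hρ : ρ.IsQF := ((isQF_toFormula hθ).relabel _).inf ((isQF_toFormula hχ).relabel _)
  refine ⟨ρ.iAlls _, isUniversal_iAlls hρ.isUniversal,
    Theory.models_formula_iff.2 fun M v => ?_⟩
  simp only [Formula.realize_iff, Formula.realize_inf, hφφ'.realize_iff, hψψ'.realize_iff,
    BoundedFormula.realize_alls, Formula.realize_iAlls, ρ, Formula.realize_relabel,
    BoundedFormula.realize_toFormula, Sum.elim_comp_map, Function.comp_id, Sum.elim_comp_inl,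
    Sum.elim_comp_inr]
  exact ⟨fun h i => ⟨h.1 _, h.2 _⟩, fun h =>
    ⟨fun xs => (h (Sum.elim xs fun _ => Classical.arbitrary M)).1,
      fun ys => (h (Sum.elim (fun _ => Classical.arbitrary M) ys)).2⟩⟩

theorem realize_of_realize_embedding {φ : L.BoundedFormula α n} (hφ : IsUniversalMod T φ)
    {M N : Type*} [L.Structure M] [L.Structure N] [Nonempty M] [Nonempty N] [M ⊨ T] [N ⊨ T]
    (j : M ↪[L] N) {v : α → M} {xs : Fin n → M} (h : φ.Realize (j ∘ v) (j ∘ xs)) :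
    φ.Realize v xs :=
  let ⟨_, hψ, hφψ⟩ := hφ
  hφψ.realize_bd_iff.2 (hψ.realize_embedding j (hφψ.realize_bd_iff.1 h))

end IsUniversalMod

end IsUniversalMod

section Preservation

universe w w'

variable {α : Type w} {T : L.Theory}

theorem models_equivSentence_of_forall_realize {Γ : Set (L.Formula α)} {φ : L.Formula α}
    (h : ∀ (M : Theory.ModelType.{u, v, max u v w} T) (v : α → M),
      (∀ γ ∈ Γ, γ.Realize v) → φ.Realize v) :
    (L.lhomWithConstants α).onTheory T ∪ Formula.equivSentence '' Γ ⊨ᵇ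
      Formula.equivSentence φ := by
  refine Theory.models_sentence_iff.2 fun M => ?_
  let := (L.lhomWithConstants α).reduct M
  obtain ⟨hT, hΓ⟩ := Theory.model_union_iff.1 M.is_model
  have : M ⊨ T := (LHom.onTheory_model _ _).1 hT
  exact (Formula.realize_equivSentence M φ).2 <| h (.of T M) _ fun γ hγ =>
    (Formula.realize_equivSentence M γ).1 (hΓ.realize_of_mem _ (Set.mem_image_of_mem _ hγ))

theorem imp_of_models_equivSentence {S : L[[α]].Theory} {γ φ : L.Formula α}
    (hS : ∀ σ ∈ S, γ ⟹[T] Formula.equivSentence.symm σ)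
    (hφ : S ⊨ᵇ Formula.equivSentence φ) : γ ⟹[T] φ := by
  refine Theory.models_formula_iff.2 fun M v hγ => ?_
  let := constantsOn.structure v
  have : M ⊨ S := (Theory.model_iff _).2 fun σ hσ =>
    (Formula.realize_equivSentence_symm M σ v).1 (Theory.models_formula_iff.1 (hS σ hσ) M v hγ)
  exact (Formula.realize_equivSentence M φ).1 (hφ.realize_sentence M)

theorem exists_mem_imp_of_forall_realize {Γ : Set (L.Formula α)} (hΓ : Γ.Nonempty)
    (hdir : DirectedOn (fun γ δ => δ ⟹[T] γ) Γ) {φ : L.Formula α}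
    (h : ∀ (M : Theory.ModelType.{u, v, max u v w} T) (v : α → M),
      (∀ γ ∈ Γ, γ.Realize v) → φ.Realize v) :
    ∃ γ ∈ Γ, γ ⟹[T] φ := by
  classical
  obtain ⟨S, hS, hSφ⟩ :=
    Theory.models_iff_finset_models.1 (models_equivSentence_of_forall_realize h)
  suffices ∃ γ ∈ Γ, ∀ σ ∈ S, γ ⟹[T] Formula.equivSentence.symm σ from
    let ⟨γ, hγ, hγS⟩ := this
    ⟨γ, hγ, imp_of_models_equivSentence hγS hSφ⟩
  clear hSφ
  induction S using Finset.induction_on with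
  | empty => exact ⟨_, hΓ.some_mem, by simp⟩
  | insert σ S _ ih =>
    rw [Finset.coe_insert, Set.insert_subset_iff] at hS
    obtain ⟨γ, hγ, hγS⟩ := ih hS.2
    obtain ⟨δ, hδ, hδσ⟩ : ∃ δ ∈ Γ, δ ⟹[T] Formula.equivSentence.symm σ := by
      rcases hS.1 with hσ | ⟨δ, hδ, rfl⟩
      · refine ⟨γ, hγ, Theory.models_formula_iff.2 fun M v _ => ?_⟩
        let := constantsOn.structure v
        have : M ⊨ (L.lhomWithConstants α).onTheory T := (LHom.onTheory_model _ _).2 M.is_model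
        exact (Formula.realize_equivSentence_symm M σ v).2 (Theory.realize_sentence_of_mem _ hσ)
      · exact ⟨δ, hδ, by simpa using Theory.Imp.refl δ⟩
    obtain ⟨ε, hε, hεγ, hεδ⟩ := hdir γ hγ δ hδ
    refine ⟨ε, hε, fun τ hτ => ?_⟩
    rcases Finset.mem_insert.1 hτ with rfl | hτ
    · exact hεδ.trans hδσ
    · exact hεγ.trans (hγS τ hτ)

theorem exists_embedding_comp_eq_of_isAtomic {β M N : Type*} [L.Structure M] [L.Structure N]
    {v : β → M} (hv : Function.Surjective v) {w : β → N}
    (h : ∀ φ : L.Formula β, φ.IsAtomic → (φ.Realize w ↔ φ.Realize v)) :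
    ∃ j : M ↪[L] N, j ∘ v = w := by
  have w_eq_iff (x y : β) : w x = w y ↔ v x = v y := by
    simpa [Formula.realize_equal] using
      h (Term.equal (Term.var x) (Term.var y)) (BoundedFormula.IsAtomic.equal _ _)
  let s : M → β := Function.surjInv hv
  have v_s (m : M) : v (s m) = m := Function.surjInv_eq hv m
  refine ⟨⟨⟨w ∘ s, fun x y hxy => ?_⟩, fun {k} F x => ?_, fun {k} R x => ?_⟩, ?_⟩
  · simpa [v_s] using (w_eq_iff _ _).1 hxy
  · simpa [Formula.realize_equal, v_s, eq_comm, Function.comp_def] using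
      h (Term.equal (Term.func F fun i => Term.var (s (x i)))
        (Term.var (s (Structure.funMap F x)))) (BoundedFormula.IsAtomic.equal _ _)
  · simpa [Formula.realize_rel, v_s, Function.comp_def] using
      h (R.formula fun i => Term.var (s (x i))) (BoundedFormula.IsAtomic.rel _ _)
  · exact funext fun x => (w_eq_iff _ _).2 (v_s (v x))

theorem exists_embedding_comp_eq_of_isQF {β M N : Type*} [L.Structure M] [L.Structure N]
    {v : β → M} (hv : Function.Surjective v) {w : β → N}
    (h : ∀ φ : L.Formula β, φ.IsQF → φ.Realize v → φ.Realize w) :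
    ∃ j : M ↪[L] N, j ∘ v = w :=
  exists_embedding_comp_eq_of_isAtomic hv fun φ hφ =>
    ⟨fun hw => by_contra fun hv => h φ.not hφ.isQF.not hv hw, h φ hφ.isQF⟩

theorem exists_model_embedding_realize {M : Type w'} [L.Structure M] [Nonempty M]
    {φ : L.Formula α} {a : α → M}
    (h : ∀ ψ : L.Formula α, ψ.IsUniversal → (φ ⟹[T] ψ) → ψ.Realize a) :
    ∃ (N : Theory.ModelType.{u, v, max u v w w'} T) (j : M ↪[L] N), φ.Realize (j ∘ a) := by
  by_contra! hno
  let diagram : Set (L.Formula (α ⊕ M)) := {θ | θ.IsQF ∧ θ.Realize (Sum.elim a id)}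
  obtain ⟨θ, ⟨hθ, hMθ⟩, hθφ⟩ : ∃ θ ∈ diagram, θ ⟹[T] (φ.relabel Sum.inl).not := by
    refine exists_mem_imp_of_forall_realize (Γ := diagram)
      ⟨⊤, .top, BoundedFormula.realize_top.2 trivial⟩
      (fun θ hθ χ hχ => ⟨θ ⊓ χ, ⟨hθ.1.inf hχ.1, Formula.realize_inf.2 ⟨hθ.2, hχ.2⟩⟩,
        Theory.inf_imp_left θ χ, Theory.inf_imp_right θ χ⟩) fun N w hw => ?_
    obtain ⟨j, hj⟩ := exists_embedding_comp_eq_of_isQF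
      (Function.Surjective.of_comp (g := Sum.inr) (f := Sum.elim a id) Function.surjective_id)
      fun θ hθ hMθ => hw θ ⟨hθ, hMθ⟩
    rw [Formula.realize_not, Formula.realize_relabel, ← hj]
    exact hno N j
  have hφθ : φ ⟹[T] forallRight θ.not := Theory.models_formula_iff.2 fun K v hφ =>
    realize_forallRight.2 fun w hθ =>
      hθφ.realize_formula K (v := Sum.elim v w) hθ (Formula.realize_relabel.2 hφ)
  exact realize_forallRight.1 (h _ (isUniversal_forallRight hθ.not.isUniversal) hφθ) id hMθ

/-- The Łoś–Tarski preservation theorem over `T`. -/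
theorem isUniversalMod_of_realize_of_realize_embedding {φ : L.Formula α}
    (hφ : ∀ (M N : Theory.ModelType.{u, v, max u v w} T) (j : M ↪[L] N) (a : α → M),
      φ.Realize (j ∘ a) → φ.Realize a) : IsUniversalMod T φ := by
  let Ψ : Set (L.Formula α) := {ψ | IsUniversalMod T ψ ∧ (φ ⟹[T] ψ)}
  obtain ⟨ψ, ⟨hψ, hφψ⟩, hψφ⟩ : ∃ ψ ∈ Ψ, ψ ⟹[T] φ := by
    refine exists_mem_imp_of_forall_realize (Γ := Ψ)
      ⟨⊤, .of_isUniversal BoundedFormula.IsQF.top.isUniversal, Theory.imp_top φ⟩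
      (fun ψ hψ χ hχ => ⟨ψ ⊓ χ, ⟨hψ.1.inf hχ.1, Theory.imp_inf hψ.2 hχ.2⟩,
        Theory.inf_imp_left ψ χ, Theory.inf_imp_right ψ χ⟩) fun M a ha => ?_
    obtain ⟨N, j, hN⟩ := exists_model_embedding_realize fun ψ hψ hφψ =>
      ha ψ ⟨.of_isUniversal hψ, hφψ⟩
    exact hφ M N j a hN
  exact hψ.congr (Theory.imp_antisymm hφψ hψφ)

end Preservation

section Negation

variable {α : Type*} [Finite α] {T : L.Theory}

theorem isUniversalMod_of_isExistential
    (hT : ∀ (k : ℕ) (φ : L.Formula (Fin k)), φ.IsExistential → IsUniversalMod T φ)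
    {φ : L.Formula α} (hφ : φ.IsExistential) :
    IsUniversalMod T φ := by
  obtain ⟨k, ⟨e⟩⟩ := Finite.exists_equiv_fin α
  refine .congr ?_ ((hT k (φ.relabel e) (isExistential_relabel hφ _)).relabel (Sum.inl ∘ e.symm))
  refine Theory.models_formula_iff.2 fun M v => Formula.realize_iff.2 ?_
  change φ.Realize v ↔ ((φ.relabel e).relabel e.symm).Realize v
  simp only [Formula.realize_relabel, Function.comp_assoc, Equiv.symm_comp_self, Function.comp_id]

theorem isUniversalMod_not
    (hT : ∀ (k : ℕ) (φ : L.Formula (Fin k)), φ.IsExistential → IsUniversalMod T φ)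
    {φ : L.Formula α} (hφ : IsUniversalMod T φ) :
    IsUniversalMod T φ.not := by
  obtain ⟨ψ, hψ, hφψ⟩ := hφ
  obtain ⟨χ, hχ, hψχ⟩ := exists_isExistential_iff_not T hψ
  exact (isUniversalMod_of_isExistential hT hχ).congr (hφψ.not.trans hψχ)

theorem isUniversalMod_toFormula_of_isPrenex
    (hT : ∀ (k : ℕ) (φ : L.Formula (Fin k)), φ.IsExistential → IsUniversalMod T φ)
    {n : ℕ} {φ : L.BoundedFormula α n}
    (hφ : φ.IsPrenex) : IsUniversalMod T φ.toFormula :=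
  hφ.induction_on_all_not (P := fun ψ => IsUniversalMod T ψ.toFormula)
    (fun hψ => .of_isUniversal (isQF_toFormula hψ).isUniversal)
    (fun hψ => (hψ.relabel _).all) (isUniversalMod_not hT)

theorem isUniversalMod_of_forall_isExistential
    (hT : ∀ (k : ℕ) (φ : L.Formula (Fin k)), φ.IsExistential → IsUniversalMod T φ)
    (φ : L.Formula α) : IsUniversalMod T φ :=
  .congr (fun M v xs => by rw [BoundedFormula.realize_iff, BoundedFormula.realize_toPrenex])
    (.of_toFormula (isUniversalMod_toFormula_of_isPrenex hT φ.toPrenex_isPrenex))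

end Negation

theorem modelComplete_of_isUniversalMod {T : L.Theory}
    (h : ∀ (n : ℕ) (φ : L.Formula (Fin n)), IsUniversalMod T φ) : ModelComplete T := by
  intro M N _ _ j n φ a
  have reflects (ψ : L.Formula (Fin n)) (hψ : ψ.Realize (j ∘ a)) : ψ.Realize a :=
    (h n ψ).realize_of_realize_embedding j (by rwa [Subsingleton.elim (j ∘ default) default])
  exact ⟨reflects φ, fun hM => by_contra fun hN => reflects φ.not hN hM⟩

theorem ModelComplete.isEC {T : L.Theory} (hT : ModelComplete T) (M : BStruc L)
    (hM : M.carrier ⊨ T) : IsEC T M.carrier :=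
  ⟨⟨M, hM, ⟨Embedding.refl L _⟩⟩, fun N hN j n φ _ a => (hT M N hM hN j n φ a).1⟩

theorem isUniversalMod_of_forall_isEC {T : L.Theory}
    (hT : ∀ M : BStruc L, M.carrier ⊨ T → IsEC T M.carrier) {n : ℕ} {φ : L.Formula (Fin n)}
    (hφ : IsExistentialFormula φ) : IsUniversalMod T φ :=
  isUniversalMod_of_realize_of_realize_embedding fun M N j a =>
    (hT ⟨M⟩ M.is_model).2 ⟨N⟩ N.is_model j n φ hφ a

/-- Robinson's test: model completeness is equivalent to (b) every model of `T` being
`T`-ec, to (c) every existential formula being `T`-equivalent to a universal one, and to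
(d) every formula being `T`-equivalent to a universal one. -/
theorem robinsons_test (T : L.Theory) :
    (ModelComplete T ↔ ∀ M : BStruc L, M.carrier ⊨ T → IsEC T M.carrier) ∧
    (ModelComplete T ↔ ∀ (n : ℕ) (φ : L.Formula (Fin n)), IsExistentialFormula φ →
      ∃ ψ : L.Formula (Fin n), IsUniversalFormula ψ ∧ FormulaConsequence T (φ.iff ψ)) ∧
    (ModelComplete T ↔ ∀ (n : ℕ) (φ : L.Formula (Fin n)),
      ∃ ψ : L.Formula (Fin n), IsUniversalFormula ψ ∧ FormulaConsequence T (φ.iff ψ)) := by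
  simp only [← isUniversalMod_iff_exists_isUniversalFormula]
  have c_imp_d (hc : ∀ (n : ℕ) (φ : L.Formula (Fin n)), IsExistentialFormula φ →
      IsUniversalMod T φ) (n : ℕ) (φ : L.Formula (Fin n)) : IsUniversalMod T φ :=
    isUniversalMod_of_forall_isExistential (fun k ψ hψ => hc k ψ (isExistentialFormula_exs hψ)) φ
  have b_imp_a (hb : ∀ M : BStruc L, M.carrier ⊨ T → IsEC T M.carrier) : ModelComplete T :=
    modelComplete_of_isUniversalMod (c_imp_d fun _ _ => isUniversalMod_of_forall_isEC hb)
  exact ⟨⟨ModelComplete.isEC, b_imp_a⟩,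
    ⟨fun ha _ _ => isUniversalMod_of_forall_isEC ha.isEC,
      fun hc => modelComplete_of_isUniversalMod (c_imp_d hc)⟩,
    ⟨fun ha => c_imp_d fun _ _ => isUniversalMod_of_forall_isEC ha.isEC,
      modelComplete_of_isUniversalMod⟩⟩

end ModelCompanionship
end
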